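/- Let E be a compact metric space, (Ω, F, ℙ) a probability space, T > 0, p ≥ 1, c > 0, and let μ be a finite signed Borel measure on E. Let f, g : [0,T] × E × Ω → E be measurable maps, and for each (t, ω) write f_t(·, ω), g_t(·, ω) : E → E. Then 𝔼[ sup_{t ∈ [0,T]} e^{−ct} W₁( (f_t(·,ω))_#μ, (g_t(·,ω))_#μ )^p ] ≤ ‖μ‖^p · sup_{x ∈ E} 𝔼[ sup_{t ∈ [0,T]} e^{−ct} d(f_t(x,ω), g_t(x,ω))^p ], where the expectations are understood as upper (outer) integrals if measurability of the suprema is not assumed. -/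

import Mathlib

/-!
Pointwise in `(t, ω)`, a test function of `BL₁` is `1`-Lipschitz, so
`W₁(F_# μ, G_# μ) ≤ ∫ d(F, G) d|μ|` (`W1_map_le`), and Hölder's inequality gives
`W₁(F_# μ, G_# μ) ^ p ≤ ‖μ‖ ^ (p - 1) ∫ d(F, G) ^ p d|μ|` (`ofReal_W1_map_rpow_le`).
Taking the supremum over `t` inside the integral, integrating in `ω`, exchanging the two
integrals, and bounding the `x`-integral by `‖μ‖` times a supremum proves the claim.

The exchange requires `(ω, x) ↦ sup_t e^{-ct} d(f_t(x, ω), g_t(x, ω)) ^ p` to be a.e.-measurable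
for `P ⊗ |μ|`, although the supremum is uncountable and no path regularity is available. (Since
`∫⁻` is a lower integral on non-measurable functions, this cannot be dispensed with.) It follows
from the measurable projection theorem (`nullMeasurableSet_image_snd`), because the superlevel
sets of the supremum are projections along `[0, T]` of measurable sets. An arbitrary base space
is first replaced by the Cantor space (`exists_cantor_reduction`); there, projections of Borel
sets are analytic, and analytic sets are null-measurable by an inner approximation by compact sets
(`exists_compact_subset_range`).
-/

open MeasureTheory Filter Topology

/-- Total variation norm of a finite signed Borel measure. -/
noncomputable def tvNorm {E : Type*} [MeasurableSpace E] (μ : SignedMeasure E) : ℝ :=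
  (μ.totalVariation Set.univ).toReal

/-- Integral of a function against a signed measure, via the Jordan decomposition. -/
noncomputable def smInt {E : Type*} [MeasurableSpace E] (μ : SignedMeasure E) (φ : E → ℝ) : ℝ :=
  ∫ x, φ x ∂μ.toJordanDecomposition.posPart - ∫ x, φ x ∂μ.toJordanDecomposition.negPart

/-- `φ ∈ BL₁(E)`: the sup norm plus a Lipschitz constant is at most `1`. -/
def memBL1 {E : Type*} [PseudoMetricSpace E] (φ : E → ℝ) : Prop :=
  ∃ a b : NNReal, (a : ℝ) + (b : ℝ) ≤ 1 ∧ (∀ x, |φ x| ≤ a) ∧ LipschitzWith b φ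

/-- Kantorovich–Rubinstein (1-Wasserstein) distance between finite signed measures. -/
noncomputable def W1 {E : Type*} [PseudoMetricSpace E] [MeasurableSpace E]
    (μ ν : SignedMeasure E) : ℝ :=
  sSup { r | ∃ φ, memBL1 φ ∧ r = |smInt μ φ - smInt ν φ| }



/-! ### Signed measures, pushforwards and `W1` -/

theorem memBL1.continuous {E : Type*} [PseudoMetricSpace E] {φ : E → ℝ} (h : memBL1 φ) :
    Continuous φ := by
  obtain ⟨a, b, -, -, hb⟩ := h
  exact hb.continuous

theorem memBL1.abs_le_one {E : Type*} [PseudoMetricSpace E] {φ : E → ℝ} (h : memBL1 φ) (x : E) :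
    |φ x| ≤ 1 := by
  obtain ⟨a, b, hab, ha, -⟩ := h
  exact (ha x).trans (by linarith [b.coe_nonneg])

theorem memBL1.abs_sub_le {E : Type*} [PseudoMetricSpace E] {φ : E → ℝ} (h : memBL1 φ) (x y : E) :
    |φ x - φ y| ≤ dist x y := by
  obtain ⟨a, b, hab, -, hb⟩ := h
  rw [← Real.dist_eq]
  refine (hb.dist_le_mul x y).trans ?_
  exact mul_le_of_le_one_left dist_nonneg (by linarith [a.coe_nonneg])

theorem integrable_of_abs_le {E : Type*} [MeasurableSpace E] (ν : Measure E) [IsFiniteMeasure ν]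
    {u : E → ℝ} (hu : Measurable u) {C : ℝ} (hC : ∀ x, |u x| ≤ C) : Integrable u ν :=
  Integrable.of_bound hu.aestronglyMeasurable C (Eventually.of_forall hC)

/-- Change of variables for `smInt`. The Jordan decomposition of `μ.map h` need not be the
pushforward of that of `μ`, but the two differences of measures agree, and this is enough. -/
theorem smInt_map {E F : Type*} [MeasurableSpace E] [MeasurableSpace F] (μ : SignedMeasure E)
    {h : E → F} (hh : Measurable h) {φ : F → ℝ} (hφ : Measurable φ) {C : ℝ}
    (hC : ∀ x, |φ x| ≤ C) : smInt (μ.map h) φ = smInt μ (fun x => φ (h x)) := by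
  set p := μ.toJordanDecomposition.posPart with hp
  set n := μ.toJordanDecomposition.negPart with hn
  set P := (SignedMeasure.toJordanDecomposition (μ.map h)).posPart with hP
  set N := (SignedMeasure.toJordanDecomposition (μ.map h)).negPart with hN
  have key : P + n.map h = p.map h + N := by
    ext s hs
    have e1 := SignedMeasure.apply_eq_posPart_real_sub_negPart_real (μ.map h) hs
    rw [VectorMeasure.map_apply _ hh hs,
      μ.apply_eq_posPart_real_sub_negPart_real (hh hs),
      ← map_measureReal_apply hh hs, ← map_measureReal_apply hh hs] at e1
    rw [← measureReal_eq_measureReal_iff, measureReal_add_apply, measureReal_add_apply]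
    linarith
  have hi : ∀ (ν : Measure F) [IsFiniteMeasure ν], Integrable φ ν := fun ν _ =>
    integrable_of_abs_le ν hφ hC
  have key2 := congrArg (fun ν : Measure F => ∫ y, φ y ∂ν) key
  simp only [integral_add_measure (hi _) (hi _)] at key2
  rw [integral_map hh.aemeasurable hφ.aestronglyMeasurable,
    integral_map hh.aemeasurable hφ.aestronglyMeasurable] at key2
  unfold smInt
  linarith

theorem abs_smInt_sub_le {E : Type*} [MeasurableSpace E] (μ : SignedMeasure E)
    {u v w : E → ℝ} (hu : Measurable u) (hv : Measurable v) {C : ℝ}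
    (hCu : ∀ x, |u x| ≤ C) (hCv : ∀ x, |v x| ≤ C) (huv : ∀ x, |u x - v x| ≤ w x)
    (hw : Integrable w μ.totalVariation) :
    |smInt μ u - smInt μ v| ≤ ∫ x, w x ∂μ.totalVariation := by
  unfold SignedMeasure.totalVariation at hw ⊢
  rw [integrable_add_measure] at hw
  rw [integral_add_measure hw.1 hw.2]
  have hb : ∀ (ν : Measure E) [IsFiniteMeasure ν], Integrable w ν →
      |∫ x, u x ∂ν - ∫ x, v x ∂ν| ≤ ∫ x, w x ∂ν := by
    intro ν _ hwν
    rw [← integral_sub (integrable_of_abs_le ν hu hCu) (integrable_of_abs_le ν hv hCv)]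
    refine norm_integral_le_of_norm_le (f := fun x => u x - v x) hwν (Eventually.of_forall fun x => ?_)
    exact huv x
  have h1 := abs_le.1 (hb _ hw.1)
  have h2 := abs_le.1 (hb _ hw.2)
  unfold smInt
  rw [abs_le]
  constructor <;> linarith [h1.1, h1.2, h2.1, h2.2]

theorem W1_nonneg {E : Type*} [PseudoMetricSpace E] [MeasurableSpace E]
    (μ ν : SignedMeasure E) : 0 ≤ W1 μ ν := by
  refine Real.sSup_nonneg ?_
  rintro r ⟨φ, -, rfl⟩
  exact abs_nonneg _

theorem integrable_dist_comp {X E : Type*} [MeasurableSpace X] [MetricSpace E] [CompactSpace E]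
    [MeasurableSpace E] [BorelSpace E] (ν : Measure X) [IsFiniteMeasure ν] {F G : X → E}
    (hF : Measurable F) (hG : Measurable G) : Integrable (fun x => dist (F x) (G x)) ν := by
  refine integrable_of_abs_le _ (hF.dist hG) (C := Metric.diam (Set.univ : Set E)) fun x => ?_
  rw [abs_of_nonneg dist_nonneg]
  exact Metric.dist_le_diam_of_mem isCompact_univ.isBounded (Set.mem_univ _) (Set.mem_univ _)

/-- Transporting each point `x` from `F x` to `G x` costs at most `∫ d(F, G) d|μ|`. -/
theorem W1_map_le {X E : Type*} [MeasurableSpace X] [MetricSpace E] [CompactSpace E]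
    [MeasurableSpace E] [BorelSpace E] (μ : SignedMeasure X) {F G : X → E}
    (hF : Measurable F) (hG : Measurable G) :
    W1 (μ.map F) (μ.map G) ≤ ∫ x, dist (F x) (G x) ∂μ.totalVariation := by
  refine Real.sSup_le ?_ (integral_nonneg fun _ => dist_nonneg)
  rintro r ⟨φ, hφ, rfl⟩
  have hm := hφ.continuous.measurable
  rw [smInt_map μ hF hm hφ.abs_le_one, smInt_map μ hG hm hφ.abs_le_one]
  refine abs_smInt_sub_le μ (hm.comp hF) (hm.comp hG) (fun x => hφ.abs_le_one _)
    (fun x => hφ.abs_le_one _) (fun x => hφ.abs_sub_le _ _) (integrable_dist_comp _ hF hG)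

/-- Hölder's inequality against the constant `1`, i.e. Jensen's inequality for the power `p`
on a measure that need not have mass one. -/
theorem rpow_lintegral_le {X : Type*} [MeasurableSpace X] (ν : Measure X) {p : ℝ} (hp : 1 ≤ p)
    {u : X → ENNReal} (hu : AEMeasurable u ν) :
    (∫⁻ x, u x ∂ν) ^ p ≤ ν Set.univ ^ (p - 1) * ∫⁻ x, u x ^ p ∂ν := by
  have hp0 : 0 < p := by linarith
  have h := eLpNorm'_le_eLpNorm'_mul_rpow_measure_univ (μ := ν) one_pos hp
    hu.aestronglyMeasurable
  simp only [eLpNorm', enorm_eq_self, ENNReal.rpow_one, div_one] at h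
  refine (ENNReal.rpow_le_rpow h hp0.le).trans_eq ?_
  rw [ENNReal.mul_rpow_of_nonneg _ _ hp0.le, ← ENNReal.rpow_mul, ← ENNReal.rpow_mul,
    one_div_mul_cancel hp0.ne', ENNReal.rpow_one, mul_comm]
  congr 2
  field_simp

theorem ofReal_W1_map_rpow_le {X E : Type*} [MeasurableSpace X] [MetricSpace E] [CompactSpace E]
    [MeasurableSpace E] [BorelSpace E] (μ : SignedMeasure X) {F G : X → E}
    (hF : Measurable F) (hG : Measurable G) {p : ℝ} (hp : 1 ≤ p) {a : ℝ} (ha : 0 ≤ a) :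
    ENNReal.ofReal (a * W1 (μ.map F) (μ.map G) ^ p) ≤
      μ.totalVariation Set.univ ^ (p - 1) *
        ∫⁻ x, ENNReal.ofReal (a * dist (F x) (G x) ^ p) ∂μ.totalVariation := by
  have hp0 : 0 ≤ p := by linarith
  have hd : Measurable fun x => ENNReal.ofReal (dist (F x) (G x)) :=
    (hF.dist hG).ennreal_ofReal
  have h1 : ENNReal.ofReal (W1 (μ.map F) (μ.map G)) ≤
      ∫⁻ x, ENNReal.ofReal (dist (F x) (G x)) ∂μ.totalVariation := by
    refine (ENNReal.ofReal_le_ofReal (W1_map_le μ hF hG)).trans ?_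
    exact (ofReal_integral_eq_lintegral_ofReal (integrable_dist_comp _ hF hG)
      (Eventually.of_forall fun _ => dist_nonneg)).le
  simp only [ENNReal.ofReal_mul ha, ← ENNReal.ofReal_rpow_of_nonneg (W1_nonneg _ _) hp0,
    ← ENNReal.ofReal_rpow_of_nonneg dist_nonneg hp0]
  rw [lintegral_const_mul _ (hd.pow_const p), mul_left_comm]
  gcongr
  exact (ENNReal.rpow_le_rpow h1 hp0).trans (rpow_lintegral_le _ hp hd.aemeasurable)

/-! ### Universal measurability of analytic sets -/

/-- If an open `U ⊆ ℕ^ℕ` contains the compact box `∏ᵢ [0, n i]`, then it already contains one of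
the larger, non-compact boxes in which only finitely many coordinates are constrained. -/
theorem exists_box_subset_open {U C : Set (ℕ → ℕ)} (hU : IsOpen U) (n : ℕ → ℕ)
    (hC : C = {x | ∀ i, x i ≤ n i}) (hCU : C ⊆ U) :
    ∃ k : ℕ, {x : ℕ → ℕ | ∀ i < k, x i ≤ n i} ⊆ U := by
  by_contra! hcon
  simp only [Set.not_subset] at hcon
  choose x hxB hxU using hcon
  -- The `i`-th coordinate of `x k` is at most `n i` once `k > i`, so the whole sequence lies in
  -- a compact product of finite sets.
  have hD : IsCompact (Set.univ.pi fun i : ℕ =>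
      Set.Iic (n i + ∑ k ∈ Finset.range (i + 1), x k i)) :=
    isCompact_univ_pi fun i => (Set.finite_Iic _).isCompact
  have hxD : ∀ k, x k ∈ Set.univ.pi fun i : ℕ =>
      Set.Iic (n i + ∑ k ∈ Finset.range (i + 1), x k i) := by
    intro k i _
    rcases lt_or_ge i k with h | h
    · exact (hxB k i h).trans (Nat.le_add_right _ _)
    · exact (Finset.single_le_sum (f := fun k => x k i) (fun _ _ => Nat.zero_le _)
        (Finset.mem_range.2 (Nat.lt_succ_of_le h))).trans (Nat.le_add_left _ _)
  obtain ⟨z, -, φ, hφ, hz⟩ := hD.tendsto_subseq hxD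
  have hzC : z ∈ C := by
    rw [hC]
    intro i
    refine le_of_tendsto ((tendsto_pi_nhds.1 hz) i) ?_
    filter_upwards [eventually_gt_atTop i] with k hk
    exact hxB _ i (hk.trans_le (hφ.id_le k))
  exact hU.isClosed_compl.mem_of_tendsto hz (Eventually.of_forall fun k => hxU _) (hCU hzC)

/-- Choquet capacitability for continuous images of `ℕ^ℕ`: the outer measure of the image is
approximated from inside by compact sets. -/
theorem exists_compact_subset_range {X : Type*} [TopologicalSpace X] [MeasurableSpace X]
    (μ : Measure X) [μ.OuterRegular]
    {f : (ℕ → ℕ) → X} (hf : Continuous f) {r : ENNReal} (hr : r < μ (Set.range f)) :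
    ∃ K ⊆ Set.range f, IsCompact K ∧ r ≤ μ K := by
  -- Outer measures of arbitrary increasing unions are continuous, so each coordinate in turn can
  -- be bounded while keeping the measure of the image above `r`.
  have step : ∀ (k : ℕ) (S : {S : Set (ℕ → ℕ) // r < μ (f '' S)}),
      ∃ m : ℕ, r < μ (f '' (S.1 ∩ {x | x k ≤ m})) := by
    rintro k ⟨S, hS⟩
    have hmono : Monotone fun m : ℕ => f '' (S ∩ {x | x k ≤ m}) := fun a b hab =>
      Set.image_mono (Set.inter_subset_inter_right _ fun x hx => le_trans hx hab)
    have hU : f '' S = ⋃ m : ℕ, f '' (S ∩ {x | x k ≤ m}) := by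
      rw [← Set.image_iUnion, ← Set.inter_iUnion]
      congr 1
      refine (Set.inter_eq_left.2 fun x _ => Set.mem_iUnion.2 ⟨x k, ?_⟩).symm
      exact le_refl (x k)
    rw [hU, hmono.measure_iUnion] at hS
    exact lt_iSup_iff.1 hS
  choose m hm using step
  let S : ℕ → {S : Set (ℕ → ℕ) // r < μ (f '' S)} := fun k =>
    Nat.rec ⟨Set.univ, by rwa [Set.image_univ]⟩
      (fun k S => ⟨S.1 ∩ {x | x k ≤ m k S}, hm k S⟩) k
  let n : ℕ → ℕ := fun k => m k (S k)
  have hS : ∀ k, {x : ℕ → ℕ | ∀ i < k, x i ≤ n i} ⊇ (S k).1 := by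
    intro k
    induction k with
    | zero => intro x _ i hi; omega
    | succ k ih =>
      intro x hx i hi
      rcases Nat.lt_succ_iff_lt_or_eq.1 hi with h | h
      · exact ih hx.1 i h
      · subst h; exact hx.2
  have hC : IsCompact {x : ℕ → ℕ | ∀ i, x i ≤ n i} := by
    have : {x : ℕ → ℕ | ∀ i, x i ≤ n i} = Set.univ.pi fun i => Set.Iic (n i) := by
      ext x; simp [Pi.le_def]
    rw [this]
    exact isCompact_univ_pi fun i => (Set.finite_Iic _).isCompact
  refine ⟨_, Set.image_subset_range f _, hC.image hf, ?_⟩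
  rw [Set.measure_eq_iInf_isOpen]
  refine le_iInf fun U => le_iInf fun hU => le_iInf fun hUo => ?_
  obtain ⟨k, hk⟩ := exists_box_subset_open (hUo.preimage hf) n rfl (Set.image_subset_iff.1 hU)
  exact (S k).2.le.trans (measure_mono (Set.image_subset_iff.2 ((hS k).trans hk)))

theorem analyticSet_nullMeasurableSet {X : Type*} [TopologicalSpace X] [T2Space X]
    [MeasurableSpace X] [OpensMeasurableSpace X]
    (μ : Measure X) [IsFiniteMeasure μ] [μ.OuterRegular]
    {A : Set X} (hA : AnalyticSet A) : NullMeasurableSet A μ := by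
  rw [AnalyticSet] at hA
  rcases hA with rfl | ⟨f, hf, rfl⟩
  · exact MeasurableSet.empty.nullMeasurableSet
  have H : ∀ q : ℚ, ∃ K ⊆ Set.range f, IsCompact K ∧
      (ENNReal.ofReal q < μ (Set.range f) → ENNReal.ofReal q ≤ μ K) := by
    intro q
    by_cases hq : ENNReal.ofReal q < μ (Set.range f)
    · obtain ⟨K, h1, h2, h3⟩ := exists_compact_subset_range μ hf hq
      exact ⟨K, h1, h2, fun _ => h3⟩
    · exact ⟨∅, Set.empty_subset _, isCompact_empty, fun h => absurd h hq⟩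
  choose K hK hKc hKμ using H
  have hm : NullMeasurableSet (⋃ q, K q) μ :=
    (MeasurableSet.iUnion fun q => (hKc q).measurableSet).nullMeasurableSet
  refine hm.congr (ae_eq_of_subset_of_measure_ge (Set.iUnion_subset hK) ?_ hm
    (measure_ne_top _ _))
  refine le_of_forall_lt fun c hc => ?_
  obtain ⟨q, -, h1, h2⟩ := ENNReal.lt_iff_exists_rat_btwn.1 hc
  exact h1.trans_le ((hKμ q h2).trans (measure_mono (Set.subset_iUnion K q)))

/-! ### Measurable projection and suprema -/

/-- A measurable set of a product depends on only countably many measurable sets of the second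
factor, hence is pulled back from a measurable set with the Cantor space as second factor. -/
theorem exists_cantor_reduction {X Y : Type*} [MeasurableSpace X] [MeasurableSpace Y]
    {A : Set (X × Y)} (hA : MeasurableSet A) :
    ∃ φ : Y → ℕ → Bool, Measurable φ ∧ ∃ A' : Set (X × (ℕ → Bool)), MeasurableSet A' ∧
      A = Prod.map id φ ⁻¹' A' := by
  rw [← generateFrom_prod] at hA
  induction A, hA using MeasurableSpace.generateFrom_induction with
  | hC A hA _ =>
    obtain ⟨U, hU, V, hV, rfl⟩ := hA
    classical
    refine ⟨fun y _ => decide (y ∈ V), measurable_pi_lambda _ fun _ =>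
      measurable_to_bool ?_, U ×ˢ {c | c 0 = true}, MeasurableSet.prod hU ?_, ?_⟩
    · have : (fun y => decide (y ∈ V)) ⁻¹' {true} = V := by
        ext y; simp
      rw [this]
      exact hV
    · exact measurable_pi_apply (X := fun _ : ℕ => Bool) 0 (measurableSet_singleton true)
    · ext ⟨x, y⟩; simp
  | empty => exact ⟨fun _ _ => true, measurable_const, ∅, MeasurableSet.empty, by simp⟩
  | compl A _ ih =>
    obtain ⟨φ, hφ, A', hA', rfl⟩ := ih
    exact ⟨φ, hφ, A'ᶜ, hA'.compl, by simp⟩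
  | iUnion s _ ih =>
    choose φ hφ A' hA' h using ih
    -- The countably many maps `φ n` are interleaved along the pairing `ℕ × ℕ ≃ ℕ`.
    refine ⟨fun y m => φ m.unpair.1 y m.unpair.2, measurable_pi_lambda _ fun m =>
      (measurable_pi_apply _).comp (hφ _),
      ⋃ n, Prod.map id (fun c k => c (Nat.pair n k)) ⁻¹' A' n,
      MeasurableSet.iUnion fun n => (measurable_id.prodMap
        (measurable_pi_lambda _ fun k => measurable_pi_apply _)) (hA' n), ?_⟩
    rw [Set.preimage_iUnion]
    refine Set.iUnion_congr fun n => ?_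
    rw [h n]
    ext ⟨x, y⟩
    simp

/-- Measurable projection theorem: projections along a standard Borel space of measurable sets
are measurable for the completion of any finite measure on the base. -/
theorem nullMeasurableSet_image_snd {X Y : Type*} [MeasurableSpace X] [StandardBorelSpace X]
    [MeasurableSpace Y] (ν : Measure Y) [IsFiniteMeasure ν]
    {A : Set (X × Y)} (hA : MeasurableSet A) : NullMeasurableSet (Prod.snd '' A) ν := by
  obtain ⟨φ, hφ, A', hA', rfl⟩ := exists_cantor_reduction hA
  have h1 : Prod.snd '' (Prod.map id φ ⁻¹' A') = φ ⁻¹' (Prod.snd '' A') := by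
    ext y; simp
  rw [h1]
  exact (analyticSet_nullMeasurableSet (ν.map φ)
    (hA'.analyticSet_image measurable_snd)).preimage (hφ.quasiMeasurePreserving ν)

theorem aemeasurable_biSup_of_measurable {X Y : Type*} [MeasurableSpace X]
    [StandardBorelSpace X] [MeasurableSpace Y] (ν : Measure Y) [IsFiniteMeasure ν]
    {s : Set X} (hs : MeasurableSet s) {h : X × Y → ENNReal} (hh : Measurable h) :
    AEMeasurable (fun y => ⨆ t ∈ s, h (t, y)) ν := by
  refine NullMeasurable.aemeasurable ?_
  refine measurable_of_Ioi (δ := NullMeasurableSpace Y ν) fun a => ?_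
  have h1 : (fun y => ⨆ t ∈ s, h (t, y)) ⁻¹' Set.Ioi a =
      Prod.snd '' ((s ×ˢ Set.univ) ∩ h ⁻¹' Set.Ioi a) := by
    ext y
    simp [lt_iSup_iff]
  have := nullMeasurableSet_image_snd ν
    ((hs.prod MeasurableSet.univ).inter (hh (measurableSet_Ioi (a := a))))
  rw [← h1] at this
  exact this

/-! ### The bound in expectation -/

/-- Expected supremum-in-time bound for the `W₁` distance between pushforwards of a fixed
signed measure under two random flows. -/
theorem expectation_sup_W1_pushforward_le
    {E : Type*} [MetricSpace E] [CompactSpace E] [MeasurableSpace E] [BorelSpace E]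
    {Ω : Type*} [MeasurableSpace Ω] (P : Measure Ω) [IsProbabilityMeasure P]
    (T : ℝ) (hT : 0 < T) (p : ℝ) (hp : 1 ≤ p) (c : ℝ) (hc : 0 < c)
    (μ : SignedMeasure E) (f g : ℝ × E × Ω → E) (hf : Measurable f) (hg : Measurable g) :
    ∫⁻ ω, ⨆ t ∈ Set.Icc (0 : ℝ) T, ENNReal.ofReal
        (Real.exp (-c * t) *
          W1 (μ.map (fun y => f (t, y, ω))) (μ.map (fun y => g (t, y, ω))) ^ p) ∂P
      ≤ ENNReal.ofReal (tvNorm μ ^ p) *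
        ⨆ x : E, ∫⁻ ω, ⨆ t ∈ Set.Icc (0 : ℝ) T, ENNReal.ofReal
          (Real.exp (-c * t) * dist (f (t, x, ω)) (g (t, x, ω)) ^ p) ∂P := by
  set ν := μ.totalVariation with hν
  set m := ν Set.univ with hm
  have hmtop : m ≠ ⊤ := measure_ne_top _ _
  have hp0 : 0 ≤ p := by linarith
  set k : ℝ × Ω × E → ENNReal := fun q => ENNReal.ofReal
    (Real.exp (-c * q.1) * dist (f (q.1, q.2.2, q.2.1)) (g (q.1, q.2.2, q.2.1)) ^ p) with hk
  have hσ : Measurable fun q : ℝ × Ω × E => (q.1, q.2.2, q.2.1) := by fun_prop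
  have hkm : Measurable k := by
    have hd : Measurable fun q : ℝ × Ω × E =>
      dist (f (q.1, q.2.2, q.2.1)) (g (q.1, q.2.2, q.2.1)) := (hf.comp hσ).dist (hg.comp hσ)
    exact (Measurable.mul (by fun_prop) (hd.pow_const p)).ennreal_ofReal
  have hH : AEMeasurable (Function.uncurry fun ω x => ⨆ t ∈ Set.Icc (0 : ℝ) T, k (t, ω, x))
      (P.prod ν) := aemeasurable_biSup_of_measurable (P.prod ν) measurableSet_Icc hkm
  calc ∫⁻ ω, ⨆ t ∈ Set.Icc (0 : ℝ) T, ENNReal.ofReal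
        (Real.exp (-c * t) *
          W1 (μ.map (fun y => f (t, y, ω))) (μ.map (fun y => g (t, y, ω))) ^ p) ∂P
      ≤ ∫⁻ ω, m ^ (p - 1) * ∫⁻ x, ⨆ t ∈ Set.Icc (0 : ℝ) T, k (t, ω, x) ∂ν ∂P := by
        refine lintegral_mono fun ω => iSup₂_le fun t ht => ?_
        have hι : Measurable fun y : E => (t, y, ω) := by fun_prop
        refine (ofReal_W1_map_rpow_le μ (hf.comp hι) (hg.comp hι) hp (Real.exp_nonneg _)).trans ?_
        gcongr with x
        exact le_iSup₂_of_le t ht le_rfl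
    _ = m ^ (p - 1) * ∫⁻ x, ∫⁻ ω, ⨆ t ∈ Set.Icc (0 : ℝ) T, k (t, ω, x) ∂P ∂ν := by
        rw [lintegral_const_mul' _ _ (ENNReal.rpow_ne_top_of_nonneg (by linarith) hmtop),
          lintegral_lintegral_swap hH]
    _ ≤ m ^ (p - 1) * ((⨆ x, ∫⁻ ω, ⨆ t ∈ Set.Icc (0 : ℝ) T, k (t, ω, x) ∂P) * m) := by
        gcongr
        rw [hm, ← lintegral_const]
        exact lintegral_mono fun x => le_iSup (fun x =>
          ∫⁻ ω, ⨆ t ∈ Set.Icc (0 : ℝ) T, k (t, ω, x) ∂P) x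
    _ = ENNReal.ofReal (tvNorm μ ^ p) *
        ⨆ x : E, ∫⁻ ω, ⨆ t ∈ Set.Icc (0 : ℝ) T, k (t, ω, x) ∂P := by
        have h1 : ENNReal.ofReal (tvNorm μ ^ p) = m ^ (p - 1) * m := by
          unfold tvNorm
          rw [← ENNReal.ofReal_rpow_of_nonneg ENNReal.toReal_nonneg hp0,
            ENNReal.ofReal_toReal hmtop]
          nth_rewrite 3 [← ENNReal.rpow_one m]
          rw [← ENNReal.rpow_add_of_nonneg _ _ (by linarith) zero_le_one, sub_add_cancel]
        rw [h1]
        ring
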